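/- Let t ≥ 2, let T be an order-t tensor with all sides of size n, and let H be the walk hypergraph of a connected d-regular graph G on n vertices with adjacency-matrix second-largest eigenvalue in absolute value λ ∈ (0,d). Suppose we observe Z_e = T_e + ν_e for all hyperedges e ∈ E with (1/|E|)·Σ_{e∈E} ν_e² ≤ δ². Suppose T̂ is any order-t tensor satisfying (1/|E|)·Σ_{e∈E} (T̂_e − Z_e)² ≤ δ² and ‖T̂‖_max ≤ ‖T‖_max (e.g., T̂ minimizes the max-quasinorm subject to the root-mean-square data-fit constraint, for which T itself is feasible). Then (1/n^t)·‖T̂ − T‖_F² ≤ 2^t·(2t−3)·1.783^{t−1}·‖T‖_max²·(λ/d) + 4δ², where 1.783 is an upper bound on Grothendieck's constant over ℝ. -/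

import Mathlib

open Classical

/-- `‖U‖_{2,∞}`: the maximum ℓ2-norm of a row of `U`. -/
noncomputable def rowTwoInf {α : Type*} {r : ℕ} (U : α → Fin r → ℝ) : ℝ :=
  ⨆ a : α, Real.sqrt (∑ l, (U a l) ^ 2)

/-- The max-quasinorm of an order-`t` tensor. -/
noncomputable def maxQnorm {t : ℕ} {n : Fin t → ℕ}
    (T : ((i : Fin t) → Fin (n i)) → ℝ) : ℝ :=
  sInf { c : ℝ | ∃ (r : ℕ) (U : (i : Fin t) → Fin (n i) → Fin r → ℝ),
    (∀ x, T x = ∑ l : Fin r, ∏ i, U i (x i) l) ∧ c = ∏ i, rowTwoInf (U i) }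

/-- Hyperedges of the walk hypergraph of a graph `G`: a tuple
`(v 0, …, v (t-1))` is a hyperedge iff it is a walk of length `t-1` in `G`. -/
def walkEdge {t n : ℕ} (G : SimpleGraph (Fin n)) (v : Fin t → Fin n) : Prop :=
  ∀ i : Fin (t - 1),
    G.Adj (v ⟨(i : ℕ), by have := i.isLt; omega⟩)
      (v ⟨(i : ℕ) + 1, by have := i.isLt; omega⟩)

/-- The sum over walks `x = v₀, v₁, …, vₛ` of `∏ M vᵢ vᵢ₊₁ * ∏ uᵢ vᵢ`. -/
noncomputable def walkSum {α : Type*} [Fintype α] (M : α → α → ℝ) :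
    (s : ℕ) → (Fin (s + 1) → α → ℝ) → α → ℝ
  | 0, u, x => u 0 x
  | s + 1, u, x => u 0 x * ∑ y, M x y * walkSum M s (fun i => u i.succ) y

lemma walkSum_eq_sum_cons {α : Type*} [Fintype α] (M : α → α → ℝ) (s : ℕ)
    (u : Fin (s + 1) → α → ℝ) (x : α) :
    walkSum M s u x = ∑ v : Fin s → α,
      (∏ i : Fin s, M ((Fin.cons x v : Fin (s + 1) → α) i.castSucc) (v i)) *
        (u 0 x * ∏ i : Fin s, u i.succ (v i)) := by
  induction s generalizing x with
  | zero => simp [walkSum]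
  | succ s ih =>
    rw [walkSum, ← (Fin.consEquiv (fun _ : Fin (s + 1) => α)).sum_comp, Fintype.sum_prod_type,
      Finset.mul_sum]
    refine Finset.sum_congr rfl fun y _ => ?_
    rw [ih, Finset.mul_sum, Finset.mul_sum]
    refine Finset.sum_congr rfl fun v _ => ?_
    simp only [Fin.consEquiv_apply, Fin.prod_univ_succ, Fin.cons_zero, Fin.cons_succ,
      Fin.castSucc_zero, Fin.succ_zero_eq_one, ← Fin.succ_castSucc]
    ring

lemma sum_walkSum {α : Type*} [Fintype α] (M : α → α → ℝ) (s : ℕ)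
    (u : Fin (s + 1) → α → ℝ) :
    ∑ x, walkSum M s u x = ∑ v : Fin (s + 1) → α,
      (∏ i : Fin s, M (v i.castSucc) (v i.succ)) * ∏ i, u i (v i) := by
  rw [← (Fin.consEquiv (fun _ : Fin (s + 1) => α)).sum_comp, Fintype.sum_prod_type]
  refine Finset.sum_congr rfl fun x _ => ?_
  rw [walkSum_eq_sum_cons]
  refine Finset.sum_congr rfl fun v _ => ?_
  simp [Fin.consEquiv_apply, Fin.prod_univ_succ (n := s)]

lemma walkSum_one {α : Type*} [Fintype α] {M : α → α → ℝ} (hM : ∀ x, ∑ y, M x y = 1) (s : ℕ)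
    (x : α) : walkSum M s (fun _ _ => 1) x = 1 := by
  induction s generalizing x with
  | zero => rfl
  | succ s ih => simp [walkSum, ih, hM]

/-- Averaging against a stochastic matrix does not increase absolute values, so the row norms
of the walk sums are controlled by the product of the row norms of the factors. -/
lemma sum_walkSum_sq_le {α L : Type*} [Fintype α] [Fintype L] {M : α → α → ℝ}
    (hM0 : ∀ x y, 0 ≤ M x y) (hM : ∀ x, ∑ y, M x y = 1) (s : ℕ)
    (u : Fin (s + 1) → α → L → ℝ) (ρ : Fin (s + 1) → ℝ) (hρ : ∀ i, 0 ≤ ρ i)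
    (hu : ∀ i x, ∑ l, u i x l ^ 2 ≤ ρ i ^ 2) (x : α) :
    ∑ l, walkSum M s (fun i y => u i y l) x ^ 2 ≤ (∏ i, ρ i) ^ 2 := by
  induction s generalizing x with
  | zero => simpa [walkSum] using hu 0 x
  | succ s ih =>
    have hB : 0 ≤ ∏ i : Fin (s + 1), ρ i.succ := Finset.prod_nonneg fun i _ => hρ _
    have hbd : ∀ l, (∑ y, M x y * walkSum M s (fun i z => u i.succ z l) y) ^ 2 ≤
        (∏ i : Fin (s + 1), ρ i.succ) ^ 2 := by
      intro l
      rw [sq_le_sq, abs_of_nonneg hB]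
      calc |∑ y, M x y * walkSum M s (fun i z => u i.succ z l) y|
          ≤ ∑ y, |M x y * walkSum M s (fun i z => u i.succ z l) y| :=
            Finset.abs_sum_le_sum_abs _ _
        _ ≤ ∑ y, M x y * ∏ i : Fin (s + 1), ρ i.succ := by
            refine Finset.sum_le_sum fun y _ => ?_
            rw [abs_mul, abs_of_nonneg (hM0 x y)]
            refine mul_le_mul_of_nonneg_left (abs_le_of_sq_le_sq ?_ hB) (hM0 x y)
            exact (Finset.single_le_sum
              (f := fun l => walkSum M s (fun i z => u i.succ z l) y ^ 2)
              (fun l _ => sq_nonneg _) (Finset.mem_univ l)).trans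
              (ih (fun i => u i.succ) (fun i => ρ i.succ) (fun i => hρ _) (fun i => hu _) y)
        _ = ∏ i : Fin (s + 1), ρ i.succ := by rw [← Finset.sum_mul, hM, one_mul]
    calc ∑ l, walkSum M (s + 1) (fun i y => u i y l) x ^ 2
        = ∑ l, u 0 x l ^ 2 * (∑ y, M x y * walkSum M s (fun i z => u i.succ z l) y) ^ 2 := by
          simp only [walkSum, mul_pow]
      _ ≤ ∑ l, u 0 x l ^ 2 * (∏ i : Fin (s + 1), ρ i.succ) ^ 2 :=
          Finset.sum_le_sum fun l _ => mul_le_mul_of_nonneg_left (hbd l) (sq_nonneg _)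
      _ = (∑ l, u 0 x l ^ 2) * (∏ i : Fin (s + 1), ρ i.succ) ^ 2 := by rw [Finset.sum_mul]
      _ ≤ ρ 0 ^ 2 * (∏ i : Fin (s + 1), ρ i.succ) ^ 2 :=
          mul_le_mul_of_nonneg_right (hu 0 x) (sq_nonneg _)
      _ = (∏ i, ρ i) ^ 2 := by rw [Fin.prod_univ_succ ρ, mul_pow]

/-- Summed Cauchy–Schwarz: a family of bilinear forms with contraction factor `κ`. -/
lemma sum_abs_sum_mul_le {α L : Type*} [Fintype α] [Fintype L] {κ a b N : ℝ} (hκ : 0 ≤ κ)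
    (ha : 0 ≤ a) (hb : 0 ≤ b) (hN : 0 ≤ N) (f g : L → α → ℝ) (K : (α → ℝ) → α → ℝ)
    (hK : ∀ h : α → ℝ, ∑ x, K h x ^ 2 ≤ κ ^ 2 * ∑ x, h x ^ 2)
    (hf : ∑ l, ∑ x, f l x ^ 2 ≤ N * a ^ 2) (hg : ∑ l, ∑ x, g l x ^ 2 ≤ N * b ^ 2) :
    ∑ l, |∑ x, f l x * K (g l) x| ≤ N * (κ * (a * b)) := by
  have h1 : ∀ l, |∑ x, f l x * K (g l) x| ≤
      κ * (√(∑ x, f l x ^ 2) * √(∑ x, g l x ^ 2)) := by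
    intro l
    calc |∑ x, f l x * K (g l) x| ≤ √(∑ x, f l x ^ 2) * √(∑ x, K (g l) x ^ 2) := by
          rw [← Real.sqrt_mul (Finset.sum_nonneg fun _ _ => sq_nonneg _)]
          exact Real.abs_le_sqrt (Finset.sum_mul_sq_le_sq_mul_sq _ _ _)
      _ ≤ √(∑ x, f l x ^ 2) * (κ * √(∑ x, g l x ^ 2)) := by
          refine mul_le_mul_of_nonneg_left ?_ (Real.sqrt_nonneg _)
          calc √(∑ x, K (g l) x ^ 2) ≤ √(κ ^ 2 * ∑ x, g l x ^ 2) := Real.sqrt_le_sqrt (hK _)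
            _ = κ * √(∑ x, g l x ^ 2) := by
              rw [Real.sqrt_mul (sq_nonneg _), Real.sqrt_sq hκ]
      _ = _ := by ring
  have hsq : ∀ c : ℝ, 0 ≤ c → √(N * c ^ 2) = √N * c := fun c hc => by
    rw [Real.sqrt_mul hN, Real.sqrt_sq hc]
  have hn : ∀ h : L → α → ℝ, ∀ l, 0 ≤ ∑ x, h l x ^ 2 :=
    fun h l => Finset.sum_nonneg fun _ _ => sq_nonneg _
  calc ∑ l, |∑ x, f l x * K (g l) x|
      ≤ κ * ∑ l, √(∑ x, f l x ^ 2) * √(∑ x, g l x ^ 2) := by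
        rw [Finset.mul_sum]; exact Finset.sum_le_sum fun l _ => h1 l
    _ ≤ κ * (√(∑ l, ∑ x, f l x ^ 2) * √(∑ l, ∑ x, g l x ^ 2)) :=
        mul_le_mul_of_nonneg_left
          (Real.sum_sqrt_mul_sqrt_le _ (fun l => hn f l) (fun l => hn g l)) hκ
    _ ≤ κ * ((√N * a) * (√N * b)) := by
        rw [← hsq a ha, ← hsq b hb]
        gcongr
    _ = (√N * √N) * (κ * (a * b)) := by ring
    _ = N * (κ * (a * b)) := by rw [Real.mul_self_sqrt hN]

/-- Expander mixing along walks: replacing the transition matrix `P` by uniform averaging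
changes the walk sums by at most `s κ ∏ ρᵢ` per starting vertex. -/
lemma sum_abs_walkSum_sub_le {α L : Type*} [Fintype α] [Nonempty α] [Fintype L] {P : α → α → ℝ}
    (hP0 : ∀ x y, 0 ≤ P x y) (hP : ∀ x, ∑ y, P x y = 1) {κ : ℝ} (hκ : 0 ≤ κ)
    (hK : ∀ h : α → ℝ, ∑ x, (∑ y, P x y * h y - (Fintype.card α : ℝ)⁻¹ * ∑ y, h y) ^ 2 ≤
      κ ^ 2 * ∑ x, h x ^ 2) (s : ℕ)
    (u : Fin (s + 1) → α → L → ℝ) (ρ : Fin (s + 1) → ℝ) (hρ : ∀ i, 0 ≤ ρ i)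
    (hu : ∀ i x, ∑ l, u i x l ^ 2 ≤ ρ i ^ 2) :
    ∑ l, |∑ x, walkSum P s (fun i y => u i y l) x -
        ∑ x, walkSum (fun _ _ => (Fintype.card α : ℝ)⁻¹) s (fun i y => u i y l) x| ≤
      Fintype.card α * (s * κ * ∏ i, ρ i) := by
  induction s with
  | zero => simp [walkSum]
  | succ s ih =>
    have hN : (0 : ℝ) < Fintype.card α := by exact_mod_cast Fintype.card_pos
    have hB : 0 ≤ ∏ i : Fin (s + 1), ρ i.succ := Finset.prod_nonneg fun i _ => hρ _
    have hsq : ∀ (h : α → L → ℝ) (c : ℝ), (∀ x, ∑ l, h x l ^ 2 ≤ c ^ 2) →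
        ∑ l, ∑ x, h x l ^ 2 ≤ Fintype.card α * c ^ 2 := by
      intro h c hh
      rw [Finset.sum_comm]
      simpa using Finset.sum_le_sum fun x (_ : x ∈ Finset.univ) => hh x
    have hu0 : ∀ l, |(Fintype.card α : ℝ)⁻¹ * ∑ x, u 0 x l| ≤ ρ 0 := by
      intro l
      rw [abs_mul, abs_of_pos (inv_pos.2 hN), inv_mul_le_iff₀ hN]
      calc |∑ x, u 0 x l| ≤ ∑ x, |u 0 x l| := Finset.abs_sum_le_sum_abs _ _
        _ ≤ ∑ _x : α, ρ 0 := Finset.sum_le_sum fun x _ => abs_le_of_sq_le_sq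
            ((Finset.single_le_sum (f := fun l => u 0 x l ^ 2) (fun l _ => sq_nonneg _)
              (Finset.mem_univ l)).trans (hu 0 x)) (hρ 0)
        _ = Fintype.card α * ρ 0 := by simp
    set J : α → α → ℝ := fun _ _ => (Fintype.card α : ℝ)⁻¹ with hJ
    set fP : L → α → ℝ := fun l => walkSum P s (fun i y => u i.succ y l) with hfP
    set fJ : L → α → ℝ := fun l => walkSum J s (fun i y => u i.succ y l) with hfJ
    have hmain := sum_abs_sum_mul_le (κ := κ) (a := ρ 0) (b := ∏ i : Fin (s + 1), ρ i.succ)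
      (N := Fintype.card α) hκ (hρ 0) hB hN.le (fun l x => u 0 x l) fP
      (fun h x => ∑ y, P x y * h y - (Fintype.card α : ℝ)⁻¹ * ∑ y, h y) hK
      (hsq (fun x l => u 0 x l) _ (hu 0))
      (hsq (fun x l => fP l x) _ (sum_walkSum_sq_le hP0 hP s (fun i => u i.succ)
        (fun i => ρ i.succ) (fun i => hρ _) (fun i => hu _)))
    have hih := ih (fun i => u i.succ) (fun i => ρ i.succ) (fun i => hρ _) (fun i => hu _)
    have hdec : ∀ l, ∑ x, walkSum P (s + 1) (fun i y => u i y l) x -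
        ∑ x, walkSum J (s + 1) (fun i y => u i y l) x =
        ∑ x, u 0 x l * (∑ y, P x y * fP l y - (Fintype.card α : ℝ)⁻¹ * ∑ y, fP l y) +
        ((Fintype.card α : ℝ)⁻¹ * ∑ x, u 0 x l) * (∑ y, fP l y - ∑ y, fJ l y) := by
      intro l
      simp only [walkSum, hfP, hfJ, hJ, ← Finset.mul_sum, mul_sub, Finset.sum_sub_distrib,
        ← Finset.sum_mul]
      ring
    calc _ ≤ ∑ l, (|∑ x, u 0 x l *
              (∑ y, P x y * fP l y - (Fintype.card α : ℝ)⁻¹ * ∑ y, fP l y)| +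
            ρ 0 * |∑ y, fP l y - ∑ y, fJ l y|) := by
          refine Finset.sum_le_sum fun l _ => ?_
          rw [hdec]
          refine (abs_add_le _ _).trans (add_le_add le_rfl ?_)
          rw [abs_mul]
          exact mul_le_mul_of_nonneg_right (hu0 l) (abs_nonneg _)
      _ ≤ Fintype.card α * (κ * (ρ 0 * ∏ i : Fin (s + 1), ρ i.succ)) +
          ρ 0 * (Fintype.card α * (s * κ * ∏ i : Fin (s + 1), ρ i.succ)) := by
          rw [Finset.sum_add_distrib, ← Finset.mul_sum]
          exact add_le_add hmain (mul_le_mul_of_nonneg_left hih (hρ 0))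
      _ = _ := by
          rw [Fin.prod_univ_succ ρ]
          push_cast
          ring

/-- Walk averages of a product of two factorized tensors are close to its full average. -/
lemma abs_sum_walk_sub_mul_le {α L L' : Type*} [Fintype α] [Nonempty α] [Fintype L] [Fintype L']
    {P : α → α → ℝ} (hP0 : ∀ x y, 0 ≤ P x y) (hP : ∀ x, ∑ y, P x y = 1) {κ : ℝ} (hκ : 0 ≤ κ)
    (hK : ∀ h : α → ℝ, ∑ x, (∑ y, P x y * h y - (Fintype.card α : ℝ)⁻¹ * ∑ y, h y) ^ 2 ≤
      κ ^ 2 * ∑ x, h x ^ 2) (s : ℕ)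
    (u : Fin (s + 1) → α → L → ℝ) (ρ : Fin (s + 1) → ℝ) (hρ : ∀ i, 0 ≤ ρ i)
    (hu : ∀ i x, ∑ l, u i x l ^ 2 ≤ ρ i ^ 2)
    (u' : Fin (s + 1) → α → L' → ℝ) (ρ' : Fin (s + 1) → ℝ) (hρ' : ∀ i, 0 ≤ ρ' i)
    (hu' : ∀ i x, ∑ l, u' i x l ^ 2 ≤ ρ' i ^ 2) :
    |∑ v : Fin (s + 1) → α, ((∏ i : Fin s, P (v i.castSucc) (v i.succ)) -
        (Fintype.card α : ℝ)⁻¹ ^ s) *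
          ((∑ l, ∏ i, u i (v i) l) * ∑ l, ∏ i, u' i (v i) l)| ≤
      Fintype.card α * (s * κ * ((∏ i, ρ i) * ∏ i, ρ' i)) := by
  have hpair := sum_abs_walkSum_sub_le hP0 hP hκ hK s
    (fun i x (p : L × L') => u i x p.1 * u' i x p.2) (fun i => ρ i * ρ' i)
    (fun i => mul_nonneg (hρ i) (hρ' i)) (fun i x => by
      simp only [mul_pow, Fintype.sum_prod_type, ← Finset.mul_sum, ← Finset.sum_mul]
      exact mul_le_mul (hu i x) (hu' i x) (Finset.sum_nonneg fun _ _ => sq_nonneg _)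
        (sq_nonneg _))
  rw [Finset.prod_mul_distrib] at hpair
  refine le_trans (le_of_eq_of_le ?_ (Finset.abs_sum_le_sum_abs _ _)) hpair
  congr 1
  simp only [sum_walkSum, ← Finset.sum_sub_distrib, ← sub_mul]
  rw [Finset.sum_comm]
  refine Finset.sum_congr rfl fun v _ => ?_
  rw [← Finset.mul_sum, Finset.sum_mul_sum, Fintype.sum_prod_type]
  simp [Finset.prod_mul_distrib]

lemma rowTwoInf_nonneg {α : Type*} {r : ℕ} (U : α → Fin r → ℝ) : 0 ≤ rowTwoInf U :=
  Real.iSup_nonneg fun _ => Real.sqrt_nonneg _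

lemma sum_sq_le_rowTwoInf_sq {α : Type*} [Finite α] {r : ℕ} (U : α → Fin r → ℝ) (a : α) :
    ∑ l, U a l ^ 2 ≤ rowTwoInf U ^ 2 :=
  (Real.sqrt_le_left (rowTwoInf_nonneg U)).1
    (le_ciSup (f := fun a => √(∑ l, U a l ^ 2)) (Set.finite_range _).bddAbove a)

/-- Every tensor of positive order has an exact factorization. -/
lemma exists_factorization {t : ℕ} (ht : 0 < t) {n : Fin t → ℕ}
    (T : ((i : Fin t) → Fin (n i)) → ℝ) :
    ∃ (r : ℕ) (U : (i : Fin t) → Fin (n i) → Fin r → ℝ),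
      ∀ x, T x = ∑ l : Fin r, ∏ i, U i (x i) l := by
  let e := Fintype.equivFin ((i : Fin t) → Fin (n i))
  refine ⟨_, fun i a l => (if e.symm l i = a then 1 else 0) *
    (if i = ⟨0, ht⟩ then T (e.symm l) else 1), fun x => ?_⟩
  rw [← e.sum_comp]
  simp only [Equiv.symm_apply_apply, Finset.prod_mul_distrib, Finset.prod_ite_eq',
    Finset.mem_univ, if_true, Finset.prod_ite_zero, Finset.prod_const_one]
  rw [Finset.sum_eq_single x]
  · simp
  · intro y _ hy
    rw [if_neg (fun h => hy (funext fun i => h i trivial)), zero_mul]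
  · simp

lemma exists_factorization_lt {t : ℕ} (ht : 0 < t) {n : Fin t → ℕ}
    (T : ((i : Fin t) → Fin (n i)) → ℝ) {c : ℝ} (hc : maxQnorm T < c) :
    ∃ (r : ℕ) (U : (i : Fin t) → Fin (n i) → Fin r → ℝ),
      (∀ x, T x = ∑ l : Fin r, ∏ i, U i (x i) l) ∧ ∏ i, rowTwoInf (U i) < c := by
  obtain ⟨r, U, hU⟩ := exists_factorization ht T
  obtain ⟨_, ⟨r', U', hU', rfl⟩, hlt⟩ := exists_lt_of_csInf_lt (by exact ⟨_, r, U, hU, rfl⟩) hc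
  exact ⟨r', U', hU', hlt⟩

/-- The spectral bound for a regular graph, in terms of the normalized adjacency matrix. -/
lemma sum_normalized_adj_sub_avg_sq_le {n d : ℕ} (G : SimpleGraph (Fin n)) [DecidableRel G.Adj]
    (hn : (n : ℝ) ≠ 0) (hd : (d : ℝ) ≠ 0) (hreg : G.IsRegularOfDegree d) (lam : ℝ)
    (hlam : ∀ u : Fin n → ℝ, ∑ i, u i = 0 →
      ∑ j, ((G.adjMatrix ℝ).mulVec u j) ^ 2 ≤ lam ^ 2 * ∑ i, (u i) ^ 2) (h : Fin n → ℝ) :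
    ∑ x, (∑ y, G.adjMatrix ℝ x y / d * h y - (n : ℝ)⁻¹ * ∑ y, h y) ^ 2 ≤
      (lam / d) ^ 2 * ∑ x, h x ^ 2 := by
  set m : ℝ := (n : ℝ)⁻¹ * ∑ y, h y with hm
  have hnm : ∑ y, h y = n * m := by rw [hm]; field_simp
  have hrow : ∀ x, ∑ y, G.adjMatrix ℝ x y = d := fun x => by
    simpa [Matrix.mulVec, dotProduct, hreg x] using
      G.adjMatrix_mulVec_const_apply (a := (1 : ℝ)) (v := x)
  have hz : ∑ i, (h i - m) = 0 := by simp [Finset.sum_sub_distrib, hnm]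
  have hvar : ∑ i, (h i - m) ^ 2 ≤ ∑ i, h i ^ 2 := by
    have : ∑ i, (h i - m) ^ 2 = ∑ i, h i ^ 2 - n * m ^ 2 := by
      simp only [sub_sq, Finset.sum_add_distrib, Finset.sum_sub_distrib, ← Finset.sum_mul,
        ← Finset.mul_sum, hnm]
      simp
      ring
    rw [this]
    have : 0 ≤ (n : ℝ) * m ^ 2 := by positivity
    linarith
  have heq : ∀ x, ∑ y, G.adjMatrix ℝ x y / d * h y - m =
      (G.adjMatrix ℝ).mulVec (fun i => h i - m) x / d := by
    intro x
    simp only [Matrix.mulVec, dotProduct, mul_sub, Finset.sum_sub_distrib, ← Finset.sum_mul, hrow]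
    rw [sub_div, mul_div_cancel_left₀ _ hd, Finset.sum_div]
    simp only [div_mul_eq_mul_div]
  simp only [heq, div_pow, ← Finset.sum_div]
  rw [div_mul_eq_mul_div]
  gcongr
  exact (hlam _ hz).trans (mul_le_mul_of_nonneg_left hvar (sq_nonneg _))

lemma prod_adjMatrix_div {n s : ℕ} (G : SimpleGraph (Fin n)) [DecidableRel G.Adj] (d : ℝ)
    (v : Fin (s + 1) → Fin n) :
    ∏ i : Fin s, G.adjMatrix ℝ (v i.castSucc) (v i.succ) / d =
      if walkEdge G v then (d ^ s)⁻¹ else 0 := by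
  have hiff : walkEdge G v ↔ ∀ i : Fin s, G.Adj (v i.castSucc) (v i.succ) := Iff.rfl
  simp only [Finset.prod_div_distrib, SimpleGraph.adjMatrix_apply, Finset.prod_ite_zero,
    Finset.mem_univ, true_implies, hiff]
  split_ifs <;> simp

lemma card_walkEdge {n d : ℕ} (s : ℕ) (G : SimpleGraph (Fin n)) [DecidableRel G.Adj]
    (hd : (d : ℝ) ≠ 0) (hP : ∀ x, ∑ y, G.adjMatrix ℝ x y / d = 1) :
    ((Finset.univ.filter (fun e : Fin (s + 1) → Fin n => walkEdge G e)).card : ℝ) =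
      n * (d : ℝ) ^ s := by
  have h := sum_walkSum (fun x y => G.adjMatrix ℝ x y / d) s (fun _ _ => 1)
  simp only [walkSum_one hP, prod_adjMatrix_div, Finset.prod_const_one, mul_one,
    ← Finset.sum_filter, Finset.sum_const, nsmul_eq_mul, Finset.card_univ, Fintype.card_fin] at h
  rw [h]
  field_simp

/-- Tensor completion with erroneous observations sampled along the walk
hypergraph of a `d`-regular expander graph: any max-quasinorm minimizer of the
`δ`-relaxed data-fit problem recovers `T` up to an additional `4δ²` error. -/
theorem tensor_completion_noisy (t n d : ℕ) (ht : 2 ≤ t)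
    (G : SimpleGraph (Fin n)) [DecidableRel G.Adj]
    (hconn : G.Connected) (hreg : G.IsRegularOfDegree d)
    (lam : ℝ) (hlam0 : 0 < lam) (hlamd : lam < d)
    (hlam : ∀ u : Fin n → ℝ, ∑ i, u i = 0 →
      ∑ j, ((G.adjMatrix ℝ).mulVec u j) ^ 2 ≤ lam ^ 2 * ∑ i, (u i) ^ 2)
    (T Z ν That : (Fin t → Fin n) → ℝ) (δ : ℝ)
    -- observations corrupted by errors:
    (hobs : ∀ e : Fin t → Fin n, walkEdge G e → Z e = T e + ν e)
    -- bounded mean squared error of the corruption: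
    (hν : (1 / ((Finset.univ.filter (fun e : Fin t → Fin n => walkEdge G e)).card : ℝ)) *
        ∑ e ∈ Finset.univ.filter (fun e : Fin t → Fin n => walkEdge G e), (ν e) ^ 2 ≤ δ ^ 2)
    -- `That` satisfies the root-mean-square data-fit constraint:
    (hfit : (1 / ((Finset.univ.filter (fun e : Fin t → Fin n => walkEdge G e)).card : ℝ)) *
        ∑ e ∈ Finset.univ.filter (fun e : Fin t → Fin n => walkEdge G e),
          (That e - Z e) ^ 2 ≤ δ ^ 2)
    -- `That` has minimal max-quasinorm (note `T` itself is feasible):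
    (hmin : maxQnorm (n := fun _ => n) That ≤ maxQnorm (n := fun _ => n) T) :
    (1 / (n : ℝ) ^ t) * ∑ x : Fin t → Fin n, (That x - T x) ^ 2 ≤
      2 ^ t * (2 * (t : ℝ) - 3) * 1.783 ^ (t - 1) *
        (maxQnorm (n := fun _ => n) T) ^ 2 * (lam / d) + 4 * δ ^ 2 := by
  obtain ⟨s, rfl⟩ : ∃ s, t = s + 1 := ⟨t - 1, by omega⟩
  have hs : 1 ≤ s := by omega
  have : Nonempty (Fin n) := hconn.nonempty
  have hn : (0 : ℝ) < n := by exact_mod_cast Fin.pos_iff_nonempty.2 this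
  have hd : (0 : ℝ) < d := hlam0.trans hlamd
  have hκ : 0 ≤ lam / d := by positivity
  have hP0 : ∀ x y, 0 ≤ G.adjMatrix ℝ x y / d := fun x y =>
    div_nonneg (by rw [SimpleGraph.adjMatrix_apply]; split_ifs <;> norm_num) hd.le
  have hP : ∀ x, ∑ y, G.adjMatrix ℝ x y / d = 1 := fun x => by
    rw [← Finset.sum_div, div_eq_one_iff_eq hd.ne']
    simpa [Matrix.mulVec, dotProduct, hreg x] using
      G.adjMatrix_mulVec_const_apply (a := (1 : ℝ)) (v := x)
  have hK : ∀ h : Fin n → ℝ, ∑ x, (∑ y, G.adjMatrix ℝ x y / d * h y -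
      (Fintype.card (Fin n) : ℝ)⁻¹ * ∑ y, h y) ^ 2 ≤ (lam / d) ^ 2 * ∑ x, h x ^ 2 := by
    rw [Fintype.card_fin]
    exact sum_normalized_adj_sub_avg_sq_le G hn.ne' hd.ne' hreg lam hlam
  have hcard := card_walkEdge s G hd.ne' hP
  set E := Finset.univ.filter (fun e : Fin (s + 1) → Fin n => walkEdge G e) with hE
  set R := maxQnorm (n := fun _ => n) T
  have hEpos : (0 : ℝ) < E.card := by rw [hcard]; positivity
  have hobserved : (1 / (E.card : ℝ)) * ∑ e ∈ E, (That e - T e) ^ 2 ≤ 4 * δ ^ 2 := by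
    have hpt : ∑ e ∈ E, (That e - T e) ^ 2 ≤
        2 * ∑ e ∈ E, (That e - Z e) ^ 2 + 2 * ∑ e ∈ E, ν e ^ 2 := by
      rw [Finset.mul_sum, Finset.mul_sum, ← Finset.sum_add_distrib]
      refine Finset.sum_le_sum fun e he => ?_
      rw [hobs e (Finset.mem_filter.1 he).2]
      nlinarith [sq_nonneg (That e - (T e + ν e) - ν e)]
    have := mul_le_mul_of_nonneg_left hpt (one_div_pos.2 hEpos).le
    linarith
  have hR0 : 0 ≤ R := Real.sInf_nonneg (by
    rintro _ ⟨r, U, -, rfl⟩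
    exact Finset.prod_nonneg fun i _ => rowTwoInf_nonneg _)
  have hdiff : ∀ ε : ℝ, 0 < ε →
      (1 / (n : ℝ) ^ (s + 1)) * ∑ x : Fin (s + 1) → Fin n, (That x - T x) ^ 2 ≤
        s * (lam / d) * (4 * (R + ε) ^ 2) + 4 * δ ^ 2 := by
    intro ε hε
    obtain ⟨r, U, hU, hUlt⟩ := exists_factorization_lt (Nat.succ_pos s) (n := fun _ => n) T
      (c := R + ε) (by linarith)
    obtain ⟨r', U', hU', hUlt'⟩ := exists_factorization_lt (Nat.succ_pos s) (n := fun _ => n) That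
      (c := R + ε) (by linarith)
    have hU0 : 0 ≤ ∏ i, rowTwoInf (U i) := Finset.prod_nonneg fun i _ => rowTwoInf_nonneg _
    have hU0' : 0 ≤ ∏ i, rowTwoInf (U' i) := Finset.prod_nonneg fun i _ => rowTwoInf_nonneg _
    have hρ := fun i => rowTwoInf_nonneg (U i)
    have hρ' := fun i => rowTwoInf_nonneg (U' i)
    have hu := fun i => sum_sq_le_rowTwoInf_sq (U i)
    have hu' := fun i => sum_sq_le_rowTwoInf_sq (U' i)
    have h11 := abs_sum_walk_sub_mul_le hP0 hP hκ hK s U _ hρ hu U _ hρ hu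
    have h12 := abs_sum_walk_sub_mul_le hP0 hP hκ hK s U _ hρ hu U' _ hρ' hu'
    have h22 := abs_sum_walk_sub_mul_le hP0 hP hκ hK s U' _ hρ' hu' U' _ hρ' hu'
    simp only [← hU, ← hU', Fintype.card_fin] at h11 h12 h22
    set a := ∏ i, rowTwoInf (U i)
    set b := ∏ i, rowTwoInf (U' i)
    set w : (Fin (s + 1) → Fin n) → ℝ := fun v =>
      (∏ i : Fin s, G.adjMatrix ℝ (v i.castSucc) (v i.succ) / d) - (n : ℝ)⁻¹ ^ s with hw
    have hexp : ∑ v, w v * (That v - T v) ^ 2 =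
        ∑ v, w v * (T v * T v) - 2 * ∑ v, w v * (T v * That v) + ∑ v, w v * (That v * That v) := by
      rw [Finset.mul_sum, ← Finset.sum_sub_distrib, ← Finset.sum_add_distrib]
      exact Finset.sum_congr rfl fun v _ => by ring
    have hlow : -(n * (s * (lam / d) * (a + b) ^ 2)) ≤ ∑ v, w v * (That v - T v) ^ 2 := by
      rw [hexp]
      linarith [(abs_le.1 h11).1, (abs_le.1 h12).2, (abs_le.1 h22).1]
    have hsplit : ∑ v, w v * (That v - T v) ^ 2 =
        n * ((1 / (E.card : ℝ)) * ∑ e ∈ E, (That e - T e) ^ 2 -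
          (1 / (n : ℝ) ^ (s + 1)) * ∑ x : Fin (s + 1) → Fin n, (That x - T x) ^ 2) := by
      simp only [hw, sub_mul, Finset.sum_sub_distrib, prod_adjMatrix_div, ite_mul, zero_mul,
        ← Finset.sum_filter, ← Finset.mul_sum]
      rw [hcard, ← hE, inv_pow]
      field_simp
      ring
    have hab : (a + b) ^ 2 ≤ 4 * (R + ε) ^ 2 := by
      calc (a + b) ^ 2 ≤ ((R + ε) + (R + ε)) ^ 2 := by gcongr
        _ = _ := by ring
    have hmul : s * (lam / d) * (a + b) ^ 2 ≤ s * (lam / d) * (4 * (R + ε) ^ 2) := by gcongr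
    rw [hsplit, ← mul_neg] at hlow
    have := le_of_mul_le_mul_left hlow hn
    linarith
  have hlim : (1 / (n : ℝ) ^ (s + 1)) * ∑ x : Fin (s + 1) → Fin n, (That x - T x) ^ 2 ≤
      s * (lam / d) * (4 * R ^ 2) + 4 * δ ^ 2 := by
    have hcont : Continuous fun ε : ℝ => s * (lam / d) * (4 * (R + ε) ^ 2) + 4 * δ ^ 2 := by
      fun_prop
    refine ge_of_tendsto ((hcont.tendsto' 0 _ (by rw [add_zero])).mono_left
      (nhdsWithin_le_nhds (s := Set.Ioi 0))) ?_
    filter_upwards [self_mem_nhdsWithin] with ε hε using hdiff ε hε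
  have hs' : (1 : ℝ) ≤ s := by exact_mod_cast hs
  have hconst : (s : ℝ) * 4 ≤
      2 ^ (s + 1) * (2 * ((s + 1 : ℕ) : ℝ) - 3) * 1.783 ^ (s + 1 - 1) := by
    have h2 : (4 : ℝ) ≤ 2 ^ (s + 1) := by
      calc (4 : ℝ) = 2 ^ 2 := by norm_num
        _ ≤ 2 ^ (s + 1) := pow_le_pow_right₀ (by norm_num) (by omega)
    have hG : (1 : ℝ) ≤ 1.783 ^ (s + 1 - 1) := one_le_pow₀ (by norm_num)
    push_cast
    calc (s : ℝ) * 4 = 4 * s * 1 := by ring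
      _ ≤ 2 ^ (s + 1) * (2 * ((s : ℝ) + 1) - 3) * 1.783 ^ (s + 1 - 1) := by
        gcongr
        · nlinarith
        · linarith
  calc _ ≤ s * (lam / d) * (4 * R ^ 2) + 4 * δ ^ 2 := hlim
    _ = s * 4 * (R ^ 2 * (lam / d)) + 4 * δ ^ 2 := by ring
    _ ≤ 2 ^ (s + 1) * (2 * ((s + 1 : ℕ) : ℝ) - 3) * 1.783 ^ (s + 1 - 1) *
          (R ^ 2 * (lam / d)) + 4 * δ ^ 2 := by gcongr
    _ = _ := by ring
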